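/- The four clones L_3 := Pol({0,1,2}; C_3, L_3rel), TL_2 := Pol({0,1,2}; C_3, T, L_2), TN := Pol({0,1,2}; C_3, T, N, N*), and W := Pol({0,1,2}; C_3, R^=_3) are pairwise incomparable with respect to minor-preserving maps: for any two distinct clones C, D among these four, there is no minor-preserving map from C to D. -/

import Mathlib

/-- The three-element domain `{0,1,2}`. -/
abbrev D3 : Type := Fin 3

/-- `n`-ary operations on `{0,1,2}`. -/
abbrev Op (n : ℕ) : Type := (Fin n → D3) → D3

/-- An `n`-ary operation `f` preserves a `k`-ary relation `R`. -/
def Preserves {n k : ℕ} (f : Op n) (R : Set (Fin k → D3)) : Prop :=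
  ∀ t : Fin n → (Fin k → D3), (∀ i, t i ∈ R) → (fun j => f fun i => t i j) ∈ R

/-- `C₃ = {(0,1),(1,2),(2,0)}`. -/
def C3rel : Set (Fin 2 → D3) :=
  { t | (t 0 = 0 ∧ t 1 = 1) ∨ (t 0 = 1 ∧ t 1 = 2) ∨ (t 0 = 2 ∧ t 1 = 0) }

/-- `L₃ = {(x,y,z) : x + y + z ≡ 0 (mod 3)}`. -/
def L3rel : Set (Fin 3 → D3) := { t | t 0 + t 1 + t 2 = 0 }

/-- `T = {(0,1),(1,0),(2,2)}`. -/
def Trel : Set (Fin 2 → D3) :=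
  { t | (t 0 = 0 ∧ t 1 = 1) ∨ (t 0 = 1 ∧ t 1 = 0) ∨ (t 0 = 2 ∧ t 1 = 2) }

/-- `L₂ = {(x,y,z) ∈ {0,1}³ : x + y + z ≡ 0 (mod 2)}`. -/
def L2rel : Set (Fin 3 → D3) :=
  { t | (t 0 = 0 ∨ t 0 = 1) ∧ (t 1 = 0 ∨ t 1 = 1) ∧ (t 2 = 0 ∨ t 2 = 1) ∧
        ((t 0).val + (t 1).val + (t 2).val) % 2 = 0 }

/-- `N = {(0,0),(1,0),(1,1),(1,2)}`. -/
def Nrel : Set (Fin 2 → D3) :=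
  { t | (t 0 = 0 ∧ t 1 = 0) ∨ (t 0 = 1 ∧ t 1 = 0) ∨ (t 0 = 1 ∧ t 1 = 1) ∨ (t 0 = 1 ∧ t 1 = 2) }

/-- `N* = {(0,0),(0,1),(1,1),(0,2)}`. -/
def Nstarrel : Set (Fin 2 → D3) :=
  { t | (t 0 = 0 ∧ t 1 = 0) ∨ (t 0 = 0 ∧ t 1 = 1) ∨ (t 0 = 1 ∧ t 1 = 1) ∨ (t 0 = 0 ∧ t 1 = 2) }

/-- `R⁼₃ = {(x,y,z) : x ∈ {0,1} ∧ (x = 0 → y = z)}`. -/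
def Req3rel : Set (Fin 3 → D3) :=
  { t | (t 0 = 0 ∨ t 0 = 1) ∧ (t 0 = 0 → t 1 = t 2) }

/-- The polymorphism clone of a family of relations on `{0,1,2}`. -/
def Pol (A : Set (Σ k : ℕ, Set (Fin k → D3))) : ∀ n, Set (Op n) :=
  fun n => { f | ∀ R ∈ A, Preserves f R.2 }

def L3clone : ∀ n, Set (Op n) :=
  Pol ({⟨2, C3rel⟩, ⟨3, L3rel⟩} : Set (Σ k : ℕ, Set (Fin k → D3)))

def TL2clone : ∀ n, Set (Op n) :=
  Pol ({⟨2, C3rel⟩, ⟨2, Trel⟩, ⟨3, L2rel⟩} : Set (Σ k : ℕ, Set (Fin k → D3)))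

def TNclone : ∀ n, Set (Op n) :=
  Pol ({⟨2, C3rel⟩, ⟨2, Trel⟩, ⟨2, Nrel⟩, ⟨2, Nstarrel⟩} : Set (Σ k : ℕ, Set (Fin k → D3)))

def Wclone : ∀ n, Set (Op n) :=
  Pol ({⟨2, C3rel⟩, ⟨3, Req3rel⟩} : Set (Σ k : ℕ, Set (Fin k → D3)))

/-- The minor `f_π` of an `n`-ary operation `f` along `π`. -/
def minor {n r : ℕ} (f : Op n) (π : Fin n → Fin r) : Op r :=
  fun x => f fun i => x (π i)

/-- `ξ` is a minor-preserving map from `C` to `D`. -/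
def IsMinorHom (C D : ∀ n, Set (Op n)) (ξ : ∀ n, Op n → Op n) : Prop :=
  (∀ n, ∀ f ∈ C n, ξ n f ∈ D n) ∧
  (∀ (n r : ℕ) (f : Op n) (π : Fin n → Fin r), f ∈ C n → ξ r (minor f π) = minor (ξ n f) π)

/-!
Minor-preserving maps transport identities `f_π = f_σ` from one clone to the other, so a clone
satisfying such identities has no minor-preserving map to a clone which does not. Four systems of
identities, all classical, separate the clones:

* a commutative binary operation: present in `L₃` (`-x - y`) and `W` (rock-paper-scissors), but
  not in `TL₂` and `TN`, where `T` would force `f(0,1) = f(1,0) = 2`;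
* a ternary weak near-unanimity operation: present in `TL₂`, `TN` and `W`, but not in `L₃`, where
  `f(0,0,1) + f(0,1,0) + f(1,0,0) = 1`;
* a quasi Mal'cev operation: present in `L₃` and `TL₂`, but not in `TN` and `W`;
* a quasi majority operation: present in `TN`, but not in `TL₂` and `W`.

For `W` the reason is that the zero sets `{i | x i = 0}` of the tuples `x ∈ {0,1}ⁿ` with `f x = 0`
form a proper filter on the set of coordinates: a quasi Mal'cev operation would put disjoint
singletons into it, and a quasi majority operation all three two-element sets of coordinates.
-/

section MinorConditions

/-- A system of identities `f_π = f_σ` on a single `n`-ary operation symbol `f`, with `r`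
variables, encoded as the set of the pairs `(π, σ)`. -/
abbrev MinorCondition (n r : ℕ) : Type := Set ((Fin n → Fin r) × (Fin n → Fin r))

/-- The operation `f` is a solution of the system of identities `S`. -/
def Satisfies {n r : ℕ} (f : Op n) (S : MinorCondition n r) : Prop :=
  ∀ p ∈ S, minor f p.1 = minor f p.2

theorem IsMinorHom.satisfies {C D : ∀ n, Set (Op n)} {ξ : ∀ n, Op n → Op n}
    (hξ : IsMinorHom C D ξ) {n r : ℕ} {S : MinorCondition n r} {f : Op n} (hf : f ∈ C n)
    (h : Satisfies f S) : Satisfies (ξ n f) S := fun p hp => by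
  rw [← hξ.2 n r f p.1 hf, ← hξ.2 n r f p.2 hf, h p hp]

theorem not_exists_isMinorHom {C D : ∀ n, Set (Op n)} {n r : ℕ} {S : MinorCondition n r}
    (hC : ∃ f ∈ C n, Satisfies f S) (hD : ∀ {f}, f ∈ D n → ¬ Satisfies f S) :
    ¬ ∃ ξ, IsMinorHom C D ξ := by
  rintro ⟨ξ, hξ⟩
  obtain ⟨f, hf, h⟩ := hC
  exact hD (hξ.1 n f hf) (hξ.satisfies hf h)

/-- The identity `f(x,y) = f(y,x)`. -/
def commutativity : MinorCondition 2 2 := {(![0, 1], ![1, 0])}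

/-- The Mal'cev identities `f(x,x,y) = f(y,x,x) = y`, with `f(y,y,y)` in place of `y`. -/
def quasiMaltsev : MinorCondition 3 2 := {(![0, 0, 1], fun _ => 1), (![1, 0, 0], fun _ => 1)}

/-- The majority identities `f(x,x,y) = f(x,y,x) = f(y,x,x) = x`, with `f(x,x,x)` in place
of `x`. -/
def quasiMajority : MinorCondition 3 2 :=
  {(![0, 0, 1], fun _ => 0), (![0, 1, 0], fun _ => 0), (![1, 0, 0], fun _ => 0)}

/-- The ternary weak near-unanimity identities `f(x,x,y) = f(x,y,x) = f(y,x,x)`, without the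
customary idempotence. -/
def weakNearUnanimity : MinorCondition 3 2 :=
  {(![0, 0, 1], ![1, 0, 0]), (![0, 1, 0], ![1, 0, 0])}

variable {r : ℕ}

theorem minor_vecTwo (f : Op 2) (i j : Fin r) (x : Fin r → D3) :
    minor f ![i, j] x = f ![x i, x j] :=
  congrArg f (by ext k; fin_cases k <;> rfl)

theorem minor_vecThree (f : Op 3) (i j k : Fin r) (x : Fin r → D3) :
    minor f ![i, j, k] x = f ![x i, x j, x k] :=
  congrArg f (by ext l; fin_cases l <;> rfl)

theorem minor_const {n : ℕ} (f : Op n) (i : Fin r) (x : Fin r → D3) :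
    minor f (fun _ => i) x = f fun _ => x i :=
  rfl

theorem op_two_ext_iff {f g : Op 2} : f = g ↔ ∀ x y, f ![x, y] = g ![x, y] := by
  refine ⟨fun h x y => h ▸ rfl, fun h => funext fun x => ?_⟩
  rw [← FinVec.etaExpand_eq x]
  exact h _ _

theorem satisfies_commutativity_iff {f : Op 2} :
    Satisfies f commutativity ↔ ∀ x y, f ![x, y] = f ![y, x] := by
  simp [Satisfies, commutativity, op_two_ext_iff, minor_vecTwo]

theorem satisfies_quasiMaltsev_iff {f : Op 3} :
    Satisfies f quasiMaltsev ↔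
      (∀ x y, f ![x, x, y] = f fun _ => y) ∧ ∀ x y, f ![y, x, x] = f fun _ => y := by
  simp [Satisfies, quasiMaltsev, op_two_ext_iff, minor_vecThree, minor_const]

theorem satisfies_quasiMajority_iff {f : Op 3} :
    Satisfies f quasiMajority ↔ (∀ x y, f ![x, x, y] = f fun _ => x) ∧
      (∀ x y, f ![x, y, x] = f fun _ => x) ∧ ∀ x y, f ![y, x, x] = f fun _ => x := by
  simp [Satisfies, quasiMajority, op_two_ext_iff, minor_vecThree, minor_const]

theorem satisfies_weakNearUnanimity_iff {f : Op 3} :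
    Satisfies f weakNearUnanimity ↔
      (∀ x y, f ![x, x, y] = f ![y, x, x]) ∧ ∀ x y, f ![x, y, x] = f ![y, x, x] := by
  simp [Satisfies, weakNearUnanimity, op_two_ext_iff, minor_vecThree]

theorem Satisfies.weakNearUnanimity_of_quasiMajority {f : Op 3} (h : Satisfies f quasiMajority) :
    Satisfies f weakNearUnanimity := by
  obtain ⟨hxxy, hxyx, hyxx⟩ := satisfies_quasiMajority_iff.1 h
  exact satisfies_weakNearUnanimity_iff.2
    ⟨fun x y => (hxxy x y).trans (hyxx x y).symm, fun x y => (hxyx x y).trans (hyxx x y).symm⟩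

end MinorConditions

section Preservation

variable {n : ℕ} {f : Op n}

theorem preserves_two_iff {R : Set (Fin 2 → D3)} :
    Preserves f R ↔ ∀ x y : Fin n → D3, (∀ i, ![x i, y i] ∈ R) → ![f x, f y] ∈ R := by
  constructor
  · intro h x y hxy
    convert h _ hxy using 1
    ext j; fin_cases j <;> rfl
  · intro h t ht
    convert h (t · 0) (t · 1) fun i => by
      rw [show ![t i 0, t i 1] = t i from FinVec.etaExpand_eq _]; exact ht i using 1
    ext j; fin_cases j <;> rfl

theorem preserves_three_iff {R : Set (Fin 3 → D3)} :
    Preserves f R ↔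
      ∀ x y z : Fin n → D3, (∀ i, ![x i, y i, z i] ∈ R) → ![f x, f y, f z] ∈ R := by
  constructor
  · intro h x y z hxyz
    convert h _ hxyz using 1
    ext j; fin_cases j <;> rfl
  · intro h t ht
    convert h (t · 0) (t · 1) (t · 2) fun i => by
      rw [show ![t i 0, t i 1, t i 2] = t i from FinVec.etaExpand_eq _]; exact ht i using 1
    ext j; fin_cases j <;> rfl

theorem mem_C3rel_iff (a b : D3) : ![a, b] ∈ C3rel ↔ b = a + 1 := by
  revert a b; unfold C3rel; decide

theorem mem_Trel_iff (a b : D3) : ![a, b] ∈ Trel ↔ b = 1 - a := by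
  revert a b; unfold Trel; decide

theorem mem_L2rel_iff (a b c : D3) :
    ![a, b, c] ∈ L2rel ↔ a ≠ 2 ∧ b ≠ 2 ∧ c = if a = b then 0 else 1 := by
  revert a b c; unfold L2rel; decide

theorem mem_Nrel_iff (a b : D3) : ![a, b] ∈ Nrel ↔ a ≠ 2 ∧ (a = 0 → b = 0) := by
  revert a b; unfold Nrel; decide

theorem mem_Nstarrel_iff (a b : D3) : ![a, b] ∈ Nstarrel ↔ ![1 - a, 1 - b] ∈ Nrel := by
  revert a b; unfold Nrel Nstarrel; decide

theorem mem_Req3rel_iff (a b c : D3) : ![a, b, c] ∈ Req3rel ↔ a ≠ 2 ∧ (a = 0 → b = c) := by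
  revert a b c; unfold Req3rel; decide

theorem preserves_C3rel_iff : Preserves f C3rel ↔ ∀ x, f (x + 1) = f x + 1 := by
  simp only [preserves_two_iff, mem_C3rel_iff]
  exact ⟨fun h x => h x (x + 1) fun _ => rfl, fun h x y hxy => (funext hxy : y = x + 1) ▸ h x⟩

theorem preserves_Trel_iff : Preserves f Trel ↔ ∀ x, f (1 - x) = 1 - f x := by
  simp only [preserves_two_iff, mem_Trel_iff]
  exact ⟨fun h x => h x (1 - x) fun _ => rfl, fun h x y hxy => (funext hxy : y = 1 - x) ▸ h x⟩

theorem preserves_L3rel_iff :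
    Preserves f L3rel ↔ ∀ x y z, x + y + z = 0 → f x + f y + f z = 0 := by
  simp only [preserves_three_iff, funext_iff]
  rfl

theorem preserves_Nstarrel_iff_of_preserves_Trel (hT : Preserves f Trel) :
    Preserves f Nstarrel ↔ Preserves f Nrel := by
  simp only [preserves_two_iff, mem_Nstarrel_iff, ← preserves_Trel_iff.1 hT]
  refine ⟨fun h x y hxy => ?_, fun h x y hxy => h (1 - x) (1 - y) hxy⟩
  simpa using h (1 - x) (1 - y) (by simpa using hxy)

theorem mem_L3clone_iff : f ∈ L3clone n ↔ Preserves f C3rel ∧ Preserves f L3rel := by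
  simp [L3clone, Pol]

theorem mem_TL2clone_iff :
    f ∈ TL2clone n ↔ Preserves f C3rel ∧ Preserves f Trel ∧ Preserves f L2rel := by
  simp [TL2clone, Pol]

theorem mem_TNclone_iff :
    f ∈ TNclone n ↔ Preserves f C3rel ∧ Preserves f Trel ∧ Preserves f Nrel := by
  have hNstar := preserves_Nstarrel_iff_of_preserves_Trel (f := f)
  simp only [TNclone, Pol, Set.mem_ofPred_eq, Set.mem_insert_iff, Set.mem_singleton_iff,
    forall_eq_or_imp, forall_eq]
  tauto

theorem mem_Wclone_iff : f ∈ Wclone n ↔ Preserves f C3rel ∧ Preserves f Req3rel := by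
  simp [Wclone, Pol]

/-- The operation `f` preserves the subset `{0,1}` of `{0,1,2}`. -/
def PreservesZeroOne (f : Op n) : Prop := ∀ x : Fin n → D3, (∀ i, x i ≠ 2) → f x ≠ 2

theorem Preserves.preservesZeroOne_of_L2rel (h : Preserves f L2rel) : PreservesZeroOne f := by
  intro x hx
  have hxx0 := preserves_three_iff.1 h x x 0 fun i => by simp [mem_L2rel_iff, hx i]
  exact ((mem_L2rel_iff _ _ _).1 hxx0).1

theorem Preserves.preservesZeroOne_of_Nrel (h : Preserves f Nrel) : PreservesZeroOne f := by
  intro x hx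
  have hx0 := preserves_two_iff.1 h x 0 fun i => by simp [mem_Nrel_iff, hx i]
  exact ((mem_Nrel_iff _ _).1 hx0).1

theorem Preserves.preservesZeroOne_of_Req3rel (h : Preserves f Req3rel) :
    PreservesZeroOne f := by
  intro x hx
  have hx00 := preserves_three_iff.1 h x 0 0 fun i => by simp [mem_Req3rel_iff, hx i]
  exact ((mem_Req3rel_iff _ _ _).1 hx00).1

theorem Preserves.apply_const_of_C3rel (hC : Preserves f C3rel) (h01 : PreservesZeroOne f)
    (a : D3) :
    f (fun _ => a) = a := by
  have hsucc (b : D3) : f (fun _ => b + 1) = f (fun _ => b) + 1 :=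
    preserves_C3rel_iff.1 hC fun _ => b
  have h0 : f (fun _ => 0) = 0 := by
    have hf0 : f (fun _ => 0) ≠ 2 := h01 _ fun _ => by decide
    have hf1 : f (fun _ => 0) + 1 ≠ 2 := hsucc 0 ▸ h01 _ fun _ => by decide
    revert hf0 hf1
    generalize f (fun _ => 0) = b
    revert b; decide
  have h1 : f (fun _ => 1) = 1 := (hsucc 0).trans (by rw [h0]; rfl)
  have h2 : f (fun _ => 2) = 2 := (hsucc 1).trans (by rw [h1]; rfl)
  fin_cases a
  exacts [h0, h1, h2]

end Preservation

section Obstructions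

theorem not_satisfies_commutativity_of_preserves_Trel {f : Op 2} (hT : Preserves f Trel)
    (h01 : PreservesZeroOne f) : ¬ Satisfies f commutativity := by
  intro hf
  have hfix : f ![0, 1] = 1 - f ![0, 1] := by
    calc f ![0, 1] = f ![1, 0] := satisfies_commutativity_iff.1 hf 0 1
      _ = f (1 - ![0, 1]) := by congr 1; decide
      _ = 1 - f ![0, 1] := preserves_Trel_iff.1 hT _
  have hne : f ![0, 1] ≠ 2 := h01 _ (by decide)
  revert hfix hne
  generalize f ![0, 1] = a
  revert a; decide

theorem not_satisfies_commutativity_of_mem_TL2clone {f : Op 2} (hf : f ∈ TL2clone 2) :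
    ¬ Satisfies f commutativity :=
  have ⟨_, hT, hL⟩ := mem_TL2clone_iff.1 hf
  not_satisfies_commutativity_of_preserves_Trel hT hL.preservesZeroOne_of_L2rel

theorem not_satisfies_commutativity_of_mem_TNclone {f : Op 2} (hf : f ∈ TNclone 2) :
    ¬ Satisfies f commutativity :=
  have ⟨_, hT, hN⟩ := mem_TNclone_iff.1 hf
  not_satisfies_commutativity_of_preserves_Trel hT hN.preservesZeroOne_of_Nrel

theorem apply_add_apply_add_apply_eq_one_of_mem_L3clone {n : ℕ} {f : Op n} (hf : f ∈ L3clone n)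
    {x y z : Fin n → D3} (hxyz : x + y + z = 1) : f x + f y + f z = 1 := by
  obtain ⟨hC, hL⟩ := mem_L3clone_iff.1 hf
  have hz : f z = f (z - 1) + 1 := by simpa using preserves_C3rel_iff.1 hC (z - 1)
  have hsum : f x + f y + f (z - 1) = 0 :=
    preserves_L3rel_iff.1 hL x y (z - 1) (by rw [← add_sub_assoc, hxyz, sub_self])
  rw [hz, ← add_assoc, hsum, zero_add]

theorem not_satisfies_weakNearUnanimity_of_mem_L3clone {f : Op 3} (hf : f ∈ L3clone 3) :
    ¬ Satisfies f weakNearUnanimity := by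
  intro h
  obtain ⟨hxxy, hxyx⟩ := satisfies_weakNearUnanimity_iff.1 h
  have hsum : f ![0, 0, 1] + f ![0, 1, 0] + f ![1, 0, 0] = 1 :=
    apply_add_apply_add_apply_eq_one_of_mem_L3clone hf (by decide)
  rw [hxxy, hxyx] at hsum
  revert hsum
  generalize f ![1, 0, 0] = a
  revert a; decide

theorem not_satisfies_quasiMaltsev_of_mem_TNclone {f : Op 3} (hf : f ∈ TNclone 3) :
    ¬ Satisfies f quasiMaltsev := by
  intro h
  obtain ⟨hC, -, hN⟩ := mem_TNclone_iff.1 hf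
  obtain ⟨hxxy, hyxx⟩ := satisfies_quasiMaltsev_iff.1 h
  have hmem := preserves_two_iff.1 hN ![1, 1, 0] ![1, 0, 0] (by simp only [mem_Nrel_iff]; decide)
  rw [hxxy, hyxx, hC.apply_const_of_C3rel hN.preservesZeroOne_of_Nrel,
    hC.apply_const_of_C3rel hN.preservesZeroOne_of_Nrel, mem_Nrel_iff] at hmem
  exact absurd (hmem.2 rfl) (by decide)

theorem not_satisfies_quasiMajority_of_mem_TL2clone {f : Op 3} (hf : f ∈ TL2clone 3) :
    ¬ Satisfies f quasiMajority := by
  intro h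
  obtain ⟨hC, -, hL⟩ := mem_TL2clone_iff.1 hf
  obtain ⟨hxxy, hxyx, hyxx⟩ := satisfies_quasiMajority_iff.1 h
  have hmem := preserves_three_iff.1 hL ![0, 0, 1] ![0, 1, 0] ![0, 1, 1]
    (by simp only [mem_L2rel_iff]; decide)
  rw [hxxy, hxyx, hyxx, hC.apply_const_of_C3rel hL.preservesZeroOne_of_L2rel,
    hC.apply_const_of_C3rel hL.preservesZeroOne_of_L2rel, mem_L2rel_iff] at hmem
  exact absurd hmem.2.2 (by decide)

theorem apply_sup_of_apply_eq_zero {n : ℕ} {f : Op n} (hR : Preserves f Req3rel)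
    {x : Fin n → D3} (hx : ∀ i, x i ≠ 2) (h0 : f x = 0) (y : Fin n → D3) :
    f (x ⊔ y) = f y := by
  have hmem := preserves_three_iff.1 hR x (x ⊔ y) y fun i =>
    (mem_Req3rel_iff _ _ _).2 ⟨hx i, fun hi => by simp [hi]⟩
  exact ((mem_Req3rel_iff _ _ _).1 hmem).2 h0

theorem not_satisfies_quasiMaltsev_of_mem_Wclone {f : Op 3} (hf : f ∈ Wclone 3) :
    ¬ Satisfies f quasiMaltsev := by
  intro h
  obtain ⟨hC, hR⟩ := mem_Wclone_iff.1 hf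
  obtain ⟨hxxy, hyxx⟩ := satisfies_quasiMaltsev_iff.1 h
  have hconst := hC.apply_const_of_C3rel hR.preservesZeroOne_of_Req3rel
  have h110 : f ![1, 1, 0] = 0 := by rw [hxxy, hconst]
  have h011 : f ![0, 1, 1] = 0 := by rw [hyxx, hconst]
  have h111 : f (fun _ => 1) = 0 := by
    calc f (fun _ => 1) = f (![0, 1, 1] ⊔ ![1, 1, 0]) := by congr 1; decide
      _ = f ![1, 1, 0] := apply_sup_of_apply_eq_zero hR (by decide) h011 _
      _ = 0 := h110
  exact absurd ((hconst 1).symm.trans h111) (by decide)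

theorem not_satisfies_quasiMajority_of_mem_Wclone {f : Op 3} (hf : f ∈ Wclone 3) :
    ¬ Satisfies f quasiMajority := by
  intro h
  obtain ⟨hC, hR⟩ := mem_Wclone_iff.1 hf
  obtain ⟨hxxy, hxyx, hyxx⟩ := satisfies_quasiMajority_iff.1 h
  have hconst := hC.apply_const_of_C3rel hR.preservesZeroOne_of_Req3rel
  have h001 : f ![0, 0, 1] = 0 := by rw [hxxy, hconst]
  have h010 : f ![0, 1, 0] = 0 := by rw [hxyx, hconst]
  have h100 : f ![1, 0, 0] = 0 := by rw [hyxx, hconst]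
  have h111 : f (fun _ => 1) = 0 := by
    calc f (fun _ => 1) = f (![0, 0, 1] ⊔ (![0, 1, 0] ⊔ ![1, 0, 0])) := by congr 1; decide
      _ = f (![0, 1, 0] ⊔ ![1, 0, 0]) := apply_sup_of_apply_eq_zero hR (by decide) h001 _
      _ = f ![1, 0, 0] := apply_sup_of_apply_eq_zero hR (by decide) h010 _
      _ = 0 := h100
  exact absurd ((hconst 1).symm.trans h111) (by decide)

end Obstructions

section AffineOperations

open scoped Fin.CommRing

theorem dotProduct_mem_L3clone {n : ℕ} {a : Fin n → D3} (ha : ∑ i, a i = 1) :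
    (fun x => a ⬝ᵥ x) ∈ L3clone n := by
  refine mem_L3clone_iff.2 ⟨preserves_C3rel_iff.2 fun x => ?_,
    preserves_L3rel_iff.2 fun x y z hxyz => ?_⟩
  · rw [dotProduct_add, dotProduct_one, ha]
  · rw [← dotProduct_add, ← dotProduct_add, hxyz, dotProduct_zero]

theorem exists_mem_L3clone_satisfies_commutativity : ∃ f ∈ L3clone 2, Satisfies f commutativity :=
  ⟨_, dotProduct_mem_L3clone (a := ![-1, -1]) (by decide),
    satisfies_commutativity_iff.2 (by decide)⟩

theorem exists_mem_L3clone_satisfies_quasiMaltsev : ∃ f ∈ L3clone 3, Satisfies f quasiMaltsev :=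
  ⟨_, dotProduct_mem_L3clone (a := ![1, -1, 1]) (by decide),
    satisfies_quasiMaltsev_iff.2 (by decide)⟩

end AffineOperations

section HomogeneousOperations

/-- A homogeneous operation in the sense of Marczewski: one commuting with all permutations of
the domain. -/
def IsHomogeneous {n : ℕ} (f : Op n) : Prop :=
  ∀ (σ : Equiv.Perm D3) (x : Fin n → D3), f (σ ∘ x) = σ (f x)

namespace IsHomogeneous

variable {n : ℕ} {f : Op n}

theorem preserves_C3rel (hf : IsHomogeneous f) : Preserves f C3rel :=
  preserves_C3rel_iff.2 (hf (Equiv.addRight 1))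

theorem preserves_Trel (hf : IsHomogeneous f) : Preserves f Trel :=
  preserves_Trel_iff.2 (hf (Equiv.subLeft 1))

end IsHomogeneous

/-- The homogeneous minority operation which is the first projection on triples of distinct
entries. -/
def minority : Op 3 := fun x =>
  if x 0 = x 1 then x 2 else if x 0 = x 2 then x 1 else x 0

/-- The dual discriminator, a homogeneous majority operation. -/
def dualDiscriminator : Op 3 := fun x => if x 0 = x 1 then x 0 else x 2

theorem isHomogeneous_minority : IsHomogeneous minority := fun σ x => by
  simp [minority, apply_ite σ]

theorem isHomogeneous_dualDiscriminator : IsHomogeneous dualDiscriminator := fun σ x => by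
  simp [dualDiscriminator, apply_ite σ]

theorem minority_mem_TL2clone : minority ∈ TL2clone 3 := by
  refine mem_TL2clone_iff.2 ⟨isHomogeneous_minority.preserves_C3rel,
    isHomogeneous_minority.preserves_Trel, preserves_three_iff.2 fun x y z h => ?_⟩
  -- On `{0,1}` the minority operation is addition modulo 2 of its three arguments.
  simp only [mem_L2rel_iff, minority] at h ⊢
  grind

theorem dualDiscriminator_mem_TNclone : dualDiscriminator ∈ TNclone 3 := by
  refine mem_TNclone_iff.2 ⟨isHomogeneous_dualDiscriminator.preserves_C3rel,
    isHomogeneous_dualDiscriminator.preserves_Trel, preserves_two_iff.2 fun x y h => ?_⟩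
  -- If `x 0 = x 1` and `y 0 ≠ y 1`, then `x 0 = 1`; if `x 0 ≠ x 1` and `y 0 = y 1`, then `y 0 = 0`.
  simp only [mem_Nrel_iff, dualDiscriminator] at h ⊢
  grind

theorem exists_mem_TL2clone_satisfies_quasiMaltsev : ∃ f ∈ TL2clone 3, Satisfies f quasiMaltsev :=
  ⟨minority, minority_mem_TL2clone, satisfies_quasiMaltsev_iff.2 (by decide)⟩

theorem exists_mem_TL2clone_satisfies_weakNearUnanimity :
    ∃ f ∈ TL2clone 3, Satisfies f weakNearUnanimity :=
  ⟨minority, minority_mem_TL2clone, satisfies_weakNearUnanimity_iff.2 (by decide)⟩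

theorem exists_mem_TNclone_satisfies_quasiMajority : ∃ f ∈ TNclone 3, Satisfies f quasiMajority :=
  ⟨dualDiscriminator, dualDiscriminator_mem_TNclone, satisfies_quasiMajority_iff.2 (by decide)⟩

theorem exists_mem_TNclone_satisfies_weakNearUnanimity :
    ∃ f ∈ TNclone 3, Satisfies f weakNearUnanimity :=
  have ⟨f, hf, h⟩ := exists_mem_TNclone_satisfies_quasiMajority
  ⟨f, hf, h.weakNearUnanimity_of_quasiMajority⟩

end HomogeneousOperations

section RockPaperScissors

/-- The winner of a round of rock-paper-scissors, in which each `a` is beaten by `a + 1`. -/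
def rockPaperScissors (a b : D3) : D3 := if b = a + 1 then b else a

theorem rockPaperScissors_add_one (a b : D3) :
    rockPaperScissors (a + 1) (b + 1) = rockPaperScissors a b + 1 := by
  revert a b; decide

theorem rockPaperScissors_ne_two {a b : D3} (ha : a ≠ 2) (hb : b ≠ 2) :
    rockPaperScissors a b ≠ 2 := by
  revert a b; decide

theorem rockPaperScissors_eq_zero_iff {a b : D3} (ha : a ≠ 2) (hb : b ≠ 2) :
    rockPaperScissors a b = 0 ↔ a = 0 ∧ b = 0 := by
  revert a b; decide

theorem mem_Wclone_of_eq_zero_imp {n : ℕ} {f : Op n} (hf : ∀ x, f (x + 1) = f x + 1)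
    (h01 : PreservesZeroOne f) (h0 : ∀ x, (∀ i, x i ≠ 2) → f x = 0 → x = 0) :
    f ∈ Wclone n := by
  refine mem_Wclone_iff.2 ⟨preserves_C3rel_iff.2 hf, preserves_three_iff.2 fun x y z h => ?_⟩
  simp only [mem_Req3rel_iff] at h ⊢
  refine ⟨h01 x fun i => (h i).1, fun hfx => ?_⟩
  have hx : x = 0 := h0 x (fun i => (h i).1) hfx
  exact congrArg f (funext fun i => (h i).2 (congrFun hx i))

theorem rockPaperScissors_mem_Wclone : (fun x => rockPaperScissors (x 0) (x 1)) ∈ Wclone 2 := by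
  refine mem_Wclone_of_eq_zero_imp (fun x => rockPaperScissors_add_one _ _)
    (fun x hx => rockPaperScissors_ne_two (hx 0) (hx 1)) fun x hx h => ?_
  rw [rockPaperScissors_eq_zero_iff (hx 0) (hx 1)] at h
  exact funext (Fin.forall_fin_two.2 h)

theorem rockPaperScissors_rockPaperScissors_mem_Wclone :
    (fun x => rockPaperScissors (rockPaperScissors (x 0) (x 1)) (x 2)) ∈ Wclone 3 := by
  have h01 {x : Fin 3 → D3} (hx : ∀ i, x i ≠ 2) : rockPaperScissors (x 0) (x 1) ≠ 2 :=
    rockPaperScissors_ne_two (hx 0) (hx 1)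
  refine mem_Wclone_of_eq_zero_imp (fun x => ?_)
    (fun x hx => rockPaperScissors_ne_two (h01 hx) (hx 2)) fun x hx h => ?_
  · simp only [Pi.add_apply, Pi.one_apply, rockPaperScissors_add_one]
  · rw [rockPaperScissors_eq_zero_iff (h01 hx) (hx 2),
      rockPaperScissors_eq_zero_iff (hx 0) (hx 1), and_assoc] at h
    exact funext (Fin.forall_fin_succ.2 ⟨h.1, Fin.forall_fin_two.2 h.2⟩)

theorem exists_mem_Wclone_satisfies_commutativity : ∃ f ∈ Wclone 2, Satisfies f commutativity :=
  ⟨_, rockPaperScissors_mem_Wclone, satisfies_commutativity_iff.2 (by decide)⟩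

theorem exists_mem_Wclone_satisfies_weakNearUnanimity :
    ∃ f ∈ Wclone 3, Satisfies f weakNearUnanimity :=
  ⟨_, rockPaperScissors_rockPaperScissors_mem_Wclone,
    satisfies_weakNearUnanimity_iff.2 (by decide)⟩

end RockPaperScissors

/-- The clones `L₃`, `TL₂`, `TN` and `W` are pairwise incomparable with respect to
minor-preserving maps. -/
theorem stmt13 :
    (¬ ∃ ξ, IsMinorHom L3clone TL2clone ξ) ∧
    (¬ ∃ ξ, IsMinorHom L3clone TNclone ξ) ∧
    (¬ ∃ ξ, IsMinorHom L3clone Wclone ξ) ∧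
    (¬ ∃ ξ, IsMinorHom TL2clone L3clone ξ) ∧
    (¬ ∃ ξ, IsMinorHom TL2clone TNclone ξ) ∧
    (¬ ∃ ξ, IsMinorHom TL2clone Wclone ξ) ∧
    (¬ ∃ ξ, IsMinorHom TNclone L3clone ξ) ∧
    (¬ ∃ ξ, IsMinorHom TNclone TL2clone ξ) ∧
    (¬ ∃ ξ, IsMinorHom TNclone Wclone ξ) ∧
    (¬ ∃ ξ, IsMinorHom Wclone L3clone ξ) ∧
    (¬ ∃ ξ, IsMinorHom Wclone TL2clone ξ) ∧
    (¬ ∃ ξ, IsMinorHom Wclone TNclone ξ) := by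
  exact ⟨not_exists_isMinorHom exists_mem_L3clone_satisfies_commutativity
      not_satisfies_commutativity_of_mem_TL2clone,
    not_exists_isMinorHom exists_mem_L3clone_satisfies_commutativity
      not_satisfies_commutativity_of_mem_TNclone,
    not_exists_isMinorHom exists_mem_L3clone_satisfies_quasiMaltsev
      not_satisfies_quasiMaltsev_of_mem_Wclone,
    not_exists_isMinorHom exists_mem_TL2clone_satisfies_weakNearUnanimity
      not_satisfies_weakNearUnanimity_of_mem_L3clone,
    not_exists_isMinorHom exists_mem_TL2clone_satisfies_quasiMaltsev
      not_satisfies_quasiMaltsev_of_mem_TNclone,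
    not_exists_isMinorHom exists_mem_TL2clone_satisfies_quasiMaltsev
      not_satisfies_quasiMaltsev_of_mem_Wclone,
    not_exists_isMinorHom exists_mem_TNclone_satisfies_weakNearUnanimity
      not_satisfies_weakNearUnanimity_of_mem_L3clone,
    not_exists_isMinorHom exists_mem_TNclone_satisfies_quasiMajority
      not_satisfies_quasiMajority_of_mem_TL2clone,
    not_exists_isMinorHom exists_mem_TNclone_satisfies_quasiMajority
      not_satisfies_quasiMajority_of_mem_Wclone,
    not_exists_isMinorHom exists_mem_Wclone_satisfies_weakNearUnanimity
      not_satisfies_weakNearUnanimity_of_mem_L3clone,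
    not_exists_isMinorHom exists_mem_Wclone_satisfies_commutativity
      not_satisfies_commutativity_of_mem_TL2clone,
    not_exists_isMinorHom exists_mem_Wclone_satisfies_commutativity
      not_satisfies_commutativity_of_mem_TNclone⟩
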